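/- For every integer j ≥ 0, Σ_{t=0}^{j} H_t/(j+1−t) = (2/(j+1)!) · ⟦j+2, 3⟧ = H_{j+1}^2 − H_{j+1}^{[2]}, where H_t is the t-th harmonic number and H_t^{[2]} = Σ_{s=1}^{t} 1/s^2. -/

import Mathlib

/-- The `r`-Stirling numbers of the first kind `⟦n,k⟧_r`: `⟦r,r⟧_r = 1`,
`⟦n,k⟧_r = 0` if `n < r` or `k < r`, and
`⟦n,k⟧_r = (n-1)·⟦n-1,k⟧_r + ⟦n-1,k-1⟧_r` for `n > r`. -/
def rStirling1 (r : ℕ) : ℕ → ℕ → ℕ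
  | 0, k => if r = 0 ∧ k = 0 then 1 else 0
  | (n+1), k =>
    if n + 1 < r ∨ k < r then 0
    else if n + 1 = r then (if k = r then 1 else 0)
    else if k = 0 then 0
    else n * rStirling1 r n k + rStirling1 r n (k - 1)

/-- The (unsigned) Stirling numbers of the first kind. -/
def stirling1 : ℕ → ℕ → ℕ := rStirling1 0

/-- `H_n^{[2]} = ∑_{s=1}^n 1/s²`. -/
def harmonicSq (n : ℕ) : ℚ := ∑ s ∈ Finset.Icc 1 n, 1 / (s : ℚ) ^ 2

/-!
For `k ≥ 1` the number `c n k = ⟦n+1,k⟧ / n!` is the `(k-1)`-st elementary symmetric function of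
`1, 1/2, …, 1/n`, with generating function `(1-x)⁻¹ (-log (1-x))^(k-1) / (k-1)!` in `n`.
Multiplication by `-log (1-x) = ∑ x^m / m` therefore gives
`∑_{t<n} c t k / (n-t) = k * c n (k+1)`. Without power series, the recurrence
`c (n+1) (k+1) = c n (k+1) + c n k / (n+1)` and the partial fraction
`(n+1) / ((t+1)(n-t)) = 1/(t+1) + 1/(n-t)` yield this by induction. The first equality of the
theorem is the case `k = 2`, where `c t 2 = H_t`; the second is Newton's identity
`2 e₂ = p₁² - p₂` for `1, 1/2, …, 1/n`.
-/

open Finset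
open scoped Nat

theorem stirling1_eq_stirlingFirst (n k : ℕ) : stirling1 n k = Nat.stirlingFirst n k := by
  induction n generalizing k with
  | zero => cases k <;> simp [stirling1, rStirling1]
  | succ n ih =>
    cases k with
    | zero => simp [stirling1, rStirling1]
    | succ k =>
      rw [Nat.stirlingFirst_succ_succ, ← ih, ← ih]
      simp [stirling1, rStirling1]

theorem harmonicSq_succ (n : ℕ) :
    harmonicSq (n + 1) = harmonicSq n + 1 / ((n : ℚ) + 1) ^ 2 := by
  simp only [harmonicSq, sum_Icc_succ_top (Nat.le_add_left 1 n), Nat.cast_add_one]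

section Convolution

variable {K : Type*} [Field K]

theorem div_div_eq_div_add_div_div_add (x : K) {u v : K} (hu : u ≠ 0) (hv : v ≠ 0)
    (huv : u + v ≠ 0) : x / u / v = (x / u + x / v) / (u + v) := by
  field_simp
  ring

theorem sum_range_succ_div_sub [CharZero K] {a b : ℕ → K}
    (hab : ∀ t, a (t + 1) = a t + b t / (t + 1)) (n : ℕ) :
    ∑ t ∈ range (n + 1), a t / ((n + 1 : ℕ) - t) =
      ∑ t ∈ range n, a t / (n - t) + (a n + ∑ t ∈ range n, b t / (n - t)) / (n + 1) := by
  have telescope : ∑ t ∈ range n, b t / (t + 1) = a n - a 0 := by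
    simp only [← sum_range_sub, hab, add_sub_cancel_left]
  have partial_fraction : ∀ t ∈ range n,
      b t / (t + 1) / (n - t) = (b t / (t + 1) + b t / (n - t)) / (n + 1) := fun t ht => by
    have sub_ne : (n : K) - t ≠ 0 := sub_ne_zero.2 (Nat.cast_injective.ne (mem_range.1 ht).ne')
    have add_eq : (t + 1 : K) + (n - t) = n + 1 := by ring
    rw [div_div_eq_div_add_div_div_add _ t.cast_add_one_ne_zero sub_ne
      (add_eq ▸ n.cast_add_one_ne_zero), add_eq]
  have split_term : ∀ t ∈ range n, a (t + 1) / ((n + 1 : ℕ) - (t + 1 : ℕ)) =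
      a t / (n - t) + (b t / (t + 1) + b t / (n - t)) / (n + 1) := fun t ht => by
    rw [hab, Nat.cast_add_one, Nat.cast_add_one, add_sub_add_right_eq_sub, add_div,
      partial_fraction t ht]
  rw [sum_range_succ', sum_congr rfl split_term, sum_add_distrib, ← sum_div, sum_add_distrib,
    telescope, Nat.cast_zero, sub_zero, Nat.cast_add_one]
  ring

end Convolution

/-- The normalized Stirling number `⟦n+1,k⟧ / n!`; for `k ≥ 1` this is the elementary symmetric
function of degree `k - 1` of `1, 1/2, …, 1/n`. The first index is shifted and the second is not, so
that the values at `k = 0` vanish and can start an induction on `k`. -/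
def normalizedStirling (n k : ℕ) : ℚ := Nat.stirlingFirst (n + 1) k / n !

theorem normalizedStirling_zero_right (n : ℕ) : normalizedStirling n 0 = 0 := by
  simp [normalizedStirling]

theorem normalizedStirling_zero_add_two (k : ℕ) : normalizedStirling 0 (k + 2) = 0 := by
  simp [normalizedStirling, Nat.stirlingFirst_eq_zero_of_lt]

theorem normalizedStirling_one_right (n : ℕ) : normalizedStirling n 1 = 1 := by
  rw [normalizedStirling, Nat.stirlingFirst_one_right, div_self (by positivity)]

theorem normalizedStirling_succ_succ (n k : ℕ) :
    normalizedStirling (n + 1) (k + 1) =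
      normalizedStirling n (k + 1) + normalizedStirling n k / (n + 1) := by
  simp only [normalizedStirling]
  rw [Nat.stirlingFirst_succ_succ, Nat.factorial_succ]
  push_cast
  field_simp

theorem normalizedStirling_two_right (n : ℕ) : normalizedStirling n 2 = harmonic n := by
  induction n with
  | zero => exact normalizedStirling_zero_add_two 0
  | succ n ih =>
    rw [normalizedStirling_succ_succ, ih, normalizedStirling_one_right, harmonic_succ,
      Nat.cast_add_one, one_div]

theorem two_mul_normalizedStirling_three_right (n : ℕ) :
    2 * normalizedStirling n 3 = harmonic n ^ 2 - harmonicSq n := by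
  induction n with
  | zero => simp [normalizedStirling_zero_add_two, harmonicSq]
  | succ n ih =>
    rw [normalizedStirling_succ_succ, mul_add, ih, normalizedStirling_two_right, harmonic_succ,
      harmonicSq_succ, Nat.cast_add_one, one_div, ← inv_pow]
    ring

theorem sum_normalizedStirling_div_sub (n k : ℕ) :
    ∑ t ∈ range n, normalizedStirling t k / ((n : ℚ) - t) = k * normalizedStirling n (k + 1) := by
  induction k generalizing n with
  | zero => simp [normalizedStirling_zero_right]
  | succ k ihk =>
    induction n with
    | zero => simp [normalizedStirling_zero_add_two]
    | succ n ihn =>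
      rw [sum_range_succ_div_sub (normalizedStirling_succ_succ · k), ihn, ihk,
        normalizedStirling_succ_succ n (k + 1), Nat.cast_add_one]
      ring

theorem stmt8 (j : ℕ) :
    (∑ t ∈ Finset.range (j + 1), harmonic t / (j + 1 - t) =
        (2 / (j + 1).factorial) * stirling1 (j + 2) 3) ∧
      (2 / (j + 1).factorial : ℚ) * stirling1 (j + 2) 3 =
        harmonic (j + 1) ^ 2 - harmonicSq (j + 1) := by
  have stirling_eq : (2 / (j + 1)! : ℚ) * stirling1 (j + 2) 3 =
      2 * normalizedStirling (j + 1) 3 := by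
    rw [stirling1_eq_stirlingFirst, normalizedStirling, div_mul_eq_mul_div, mul_div_assoc]
  have sum_eq := sum_normalizedStirling_div_sub (j + 1) 2
  simp only [normalizedStirling_two_right, Nat.cast_succ j, Nat.cast_ofNat] at sum_eq
  rw [stirling_eq]
  exact ⟨sum_eq, two_mul_normalizedStirling_three_right (j + 1)⟩
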